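/- Let n > 1 be an integer and let k be a positive integer such that (n+1)·k is even. Then (1, n^{(n+1)k} - 1, n^{(n+1)k}) is an abc triple. -/

import Mathlib

open scoped Classical

/-- The radical of a natural number: the product of its distinct prime factors. -/
def rad (n : ℕ) : ℕ := ∏ p ∈ n.primeFactors, p

/-- The cosocle of a natural number: `n / rad n`. -/
def cosocle (n : ℕ) : ℕ := n / rad n

/-- `(a, b, c)` is an abc triple: `a, b, c` are relatively prime positive integers with
`a + b = c` and `rad (a*b*c) < c`. -/
def IsABCTriple (a b c : ℕ) : Prop :=
  0 < a ∧ 0 < b ∧ 0 < c ∧ a + b = c ∧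
    Nat.Coprime a b ∧ Nat.Coprime a c ∧ Nat.Coprime b c ∧ rad (a * b * c) < c

/-!
Since `n ≡ -1` modulo `n + 1`, raising to the power `n + 1` gives `n ^ (n + 1) ≡ (-1) ^ (n + 1)`
modulo `(n + 1) ^ 2`. As `(n + 1) * k` is even, raising to the power `k` shows that
`(n + 1) ^ 2 ∣ c - 1` for `c = n ^ ((n + 1) * k)`. A square factor `d ^ 2` of `c - 1` makes
`rad (c - 1)` at most `(c - 1) / d`, and with `d = n + 1` this gain outweighs the factor
`rad c ≤ n`.
-/

open UniqueFactorizationMonoid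

theorem radical_mul_dvd_of_sq_dvd {M : Type*} [CommMonoidWithZero M] [NormalizationMonoid M]
    [UniqueFactorizationMonoid M] {d b : M} (h : d ^ 2 ∣ b) : radical b * d ∣ b := by
  obtain rfl | hb := eq_or_ne b 0
  · exact dvd_zero _
  obtain ⟨t, rfl⟩ := h
  have dvd_sq : d ^ 2 * t ∣ (d * t) ^ 2 := ⟨t, by rw [mul_pow, sq t, mul_assoc]⟩
  have radical_dvd : radical (d ^ 2 * t) ∣ d * t :=
    (exists_dvd_pow_iff_radical_dvd hb).1 ⟨2, dvd_sq⟩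
  calc radical (d ^ 2 * t) * d ∣ d * t * d := mul_dvd_mul_right radical_dvd d
    _ = d ^ 2 * t := by rw [mul_right_comm, ← sq]

theorem rad_eq_radical (n : ℕ) : rad n = radical n :=
  Nat.radical_eq_prod_primeFactors.symm

theorem rad_mul_le (a b : ℕ) : rad (a * b) ≤ rad a * rad b := by
  simp only [rad_eq_radical]
  exact Nat.le_of_dvd (Nat.mul_pos (Nat.radical_pos a) (Nat.radical_pos b)) radical_mul_dvd

theorem rad_pow_le {n : ℕ} (hn : n ≠ 0) (m : ℕ) : rad (n ^ m) ≤ n := by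
  rw [rad_eq_radical]
  exact Nat.le_of_dvd hn.bot_lt (radical_pow_dvd.trans radical_dvd_self)

theorem isABCTriple_one_of_sq_dvd {c d : ℕ} (hc : 1 < c) (hdvd : d ^ 2 ∣ c - 1)
    (hrad : rad c ≤ d) : IsABCTriple 1 (c - 1) c := by
  have pred_pos : 0 < c - 1 := Nat.sub_pos_of_lt hc
  have coprime : Nat.Coprime (c - 1) c :=
    (Nat.coprime_self_sub_left hc.le).2 (Nat.coprime_one_left c)
  have rad_lt : rad (1 * (c - 1) * c) < c :=
    calc rad (1 * (c - 1) * c) ≤ rad (c - 1) * rad c := by rw [one_mul]; exact rad_mul_le _ _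
      _ ≤ rad (c - 1) * d := Nat.mul_le_mul_left _ hrad
      _ ≤ c - 1 := by
        rw [rad_eq_radical]
        exact Nat.le_of_dvd pred_pos (radical_mul_dvd_of_sq_dvd hdvd)
      _ < c := Nat.sub_one_lt_of_lt hc
  exact ⟨one_pos, pred_pos, zero_lt_one.trans hc, Nat.add_sub_of_le hc.le,
    Nat.coprime_one_left _, Nat.coprime_one_left _, coprime, rad_lt⟩

theorem pow_succ_dvd_pow_mul_sub_pow_mul {R : Type*} [CommRing R] {p : ℕ} {a b : R}
    (h : (p : R) ∣ a - b) (j k : ℕ) :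
    (p : R) ^ (j + 1) ∣ a ^ (p ^ j * k) - b ^ (p ^ j * k) := by
  rw [pow_mul, pow_mul]
  exact (dvd_sub_pow_of_dvd_sub h j).trans (sub_dvd_pow_sub_pow _ _ k)

theorem pow_modEq_one_of_even {n j k : ℕ} (heven : Even ((n + 1) ^ j * k)) :
    n ^ ((n + 1) ^ j * k) ≡ 1 [MOD (n + 1) ^ (j + 1)] := by
  have dvd_sub_neg_one : ((n + 1 : ℕ) : ℤ) ∣ n - (-1) := by simp
  have dvd_pow_sub := pow_succ_dvd_pow_mul_sub_pow_mul dvd_sub_neg_one j k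
  rw [heven.neg_one_pow] at dvd_pow_sub
  exact (Nat.modEq_iff_dvd.2 (mod_cast dvd_pow_sub)).symm

theorem stmt_17 (n : ℕ) (hn : 1 < n) (k : ℕ) (hk : 0 < k) (heven : Even ((n + 1) * k)) :
    IsABCTriple 1 (n ^ ((n + 1) * k) - 1) (n ^ ((n + 1) * k)) := by
  have one_lt : 1 < n ^ ((n + 1) * k) := Nat.one_lt_pow (by positivity) hn
  have modEq_one : n ^ ((n + 1) * k) ≡ 1 [MOD (n + 1) ^ 2] := by
    simpa only [pow_one] using pow_modEq_one_of_even (j := 1) (by rwa [pow_one])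
  have sq_dvd : (n + 1) ^ 2 ∣ n ^ ((n + 1) * k) - 1 :=
    (Nat.modEq_iff_dvd' one_lt.le).1 modEq_one.symm
  have rad_le : rad (n ^ ((n + 1) * k)) ≤ n + 1 :=
    (rad_pow_le (by positivity) _).trans n.le_succ
  exact isABCTriple_one_of_sq_dvd one_lt sq_dvd rad_le
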